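/- With $\hat H_2$ as in the context, one has $\hat H_2'(y) < 0$ for all $1 < y < \Lambda_3$ and $\hat H_2'(y) > 0$ for all $y > \Lambda_3$. -/

import Mathlib

/-- The interpolated function `Ĥ₂(y) = (1 - f(y))(-1/(2y²) - y) + f(y)(½(y-Λ₃)² + B)`
from the appendix of the paper. -/
noncomputable def H2hat (Λ3 B : ℝ) (f : ℝ → ℝ) (y : ℝ) : ℝ :=
  (1 - f y) * (-(1 / (2 * y ^ 2)) - y) + f y * ((y - Λ3) ^ 2 / 2 + B)

/-!
Writing `Ĥ₂ = (1 - f) H₂ + f V`, the derivative is `(1 - f) H₂' + f V' + f' (V - H₂)`. On `(1, Λ₃)`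
the first two terms form a convex combination of the negative numbers `H₂'` and `V'`, and the last
one is nonpositive: `f'` is nonnegative and vanishes outside the transition interval, on which
`V ≤ H₂`. Beyond `Λ₃` the function `Ĥ₂` is the parabola `V`, with vertex at `Λ₃`.
-/

section Interpolation

open Set

theorem hasDerivAt_interpolation {𝕜 E : Type*} [NontriviallyNormedField 𝕜]
    [NormedAddCommGroup E] [NormedSpace 𝕜 E] {f : 𝕜 → 𝕜} {g h : 𝕜 → E} {f' x : 𝕜} {g' h' : E}
    (hf : HasDerivAt f f' x) (hg : HasDerivAt g g' x) (hh : HasDerivAt h h' x) :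
    HasDerivAt (fun y ↦ (1 - f y) • g y + f y • h y)
      ((1 - f x) • g' + f x • h' + f' • (h x - g x)) x := by
  convert ((hf.const_sub 1).fun_smul hg).fun_add (hf.fun_smul hh) using 1
  module

theorem deriv_interpolation_neg {f g h : ℝ → ℝ} {f' g' h' x : ℝ}
    (hf : HasDerivAt f f' x) (hg : HasDerivAt g g' x) (hh : HasDerivAt h h' x)
    (hfx : f x ∈ Icc 0 1) (hg' : g' < 0) (hh' : h' < 0) (hgap : f' * (h x - g x) ≤ 0) :
    deriv (fun y ↦ (1 - f y) * g y + f y * h y) x < 0 := by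
  have hconvex : (1 - f x) * g' + f x * h' < 0 :=
    convex_Iio (0 : ℝ) hg' hh' (sub_nonneg.2 hfx.2) hfx.1 (sub_add_cancel 1 (f x))
  exact (hasDerivAt_interpolation hf hg hh).deriv.trans_lt (add_neg_of_neg_of_nonpos hconvex hgap)

end Interpolation

section Cutoff

open Set Function

theorem mem_Icc_of_monotone_of_eqOn_Iic_of_eqOn_Ici {α β : Type*} [Lattice α] [Preorder β]
    {f : α → β} {a b : α} {c d : β} (hf : Monotone f) (hc : EqOn f (fun _ ↦ c) (Iic a))
    (hd : EqOn f (fun _ ↦ d) (Ici b)) (x : α) : f x ∈ Icc c d :=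
  ⟨(hc (inf_le_right : x ⊓ a ≤ a)).ge.trans (hf inf_le_left),
    (hf le_sup_left).trans (hd (le_sup_right : b ≤ x ⊔ b)).le⟩

theorem support_deriv_subset_Icc {E : Type*} [NormedAddCommGroup E] [NormedSpace ℝ E]
    {f : ℝ → E} {a b : ℝ} {c d : E} (hc : EqOn f (fun _ ↦ c) (Iic a))
    (hd : EqOn f (fun _ ↦ d) (Ici b)) : support (deriv f) ⊆ Icc a b := by
  intro x hx
  by_contra hxab
  rcases not_and_or.1 hxab with hxa | hbx
  · exact hx (by simpa using (hc.mono Iio_subset_Iic_self).deriv isOpen_Iio (not_le.1 hxa))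
  · exact hx (by simpa using (hd.mono Ioi_subset_Ici_self).deriv isOpen_Ioi (not_le.1 hbx))

theorem deriv_mul_nonpos_of_monotone {f φ : ℝ → ℝ} {s : Set ℝ} (hf : Monotone f)
    (hsupp : support (deriv f) ⊆ s) (hφ : ∀ x ∈ s, φ x ≤ 0) (x : ℝ) :
    deriv f x * φ x ≤ 0 := by
  by_cases hx : deriv f x = 0
  · rw [hx, zero_mul]
  · exact mul_nonpos_of_nonneg_of_nonpos hf.deriv_nonneg (hφ x (hsupp hx))

end Cutoff

namespace H2hat

/-- The Hamiltonian `H₂(y) = -1/(2y²) - y`, with which `Ĥ₂` agrees where `f = 0`. -/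
noncomputable def H2 (y : ℝ) : ℝ := -(1 / (2 * y ^ 2)) - y

/-- The quadratic profile `V(y) = ½(y-Λ₃)² + B`, with which `Ĥ₂` agrees where `f = 1`. -/
noncomputable def V (Λ3 B y : ℝ) : ℝ := (y - Λ3) ^ 2 / 2 + B

theorem hasDerivAt_H2 {y : ℝ} (hy : y ≠ 0) : HasDerivAt H2 (1 / y ^ 3 - 1) y := by
  have hsq : HasDerivAt (fun z : ℝ ↦ 2 * z ^ 2) (2 * (2 * y)) y := by
    simpa using (hasDerivAt_pow 2 y).const_mul 2
  have hinv := (hasDerivAt_const y (1 : ℝ)).fun_div hsq (by positivity)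
  exact (hinv.fun_neg.fun_sub (hasDerivAt_id' y)).congr_deriv (by field_simp; ring)

theorem hasDerivAt_V (Λ3 B y : ℝ) : HasDerivAt (V Λ3 B) (y - Λ3) y :=
  (((((hasDerivAt_id' y).sub_const Λ3).fun_pow 2).div_const 2).add_const B).congr_deriv (by simp)

theorem eqOn_V {Λ3 B : ℝ} {f : ℝ → ℝ} {s : Set ℝ} (hf : Set.EqOn f (fun _ ↦ 1) s) :
    Set.EqOn (H2hat Λ3 B f) (V Λ3 B) s :=
  fun y hy ↦ by simp [H2hat, V, hf hy]

end H2hat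

open H2hat in
theorem stmt_15_general {a b Λ3 B : ℝ} {f : ℝ → ℝ} (hbΛ3 : b ≤ Λ3)
    (hVH : ∀ y ∈ Set.Icc a b, V Λ3 B y ≤ H2 y) (hf : Differentiable ℝ f) (hfmono : Monotone f)
    (hf0 : Set.EqOn f (fun _ ↦ 0) (Set.Iic a)) (hf1 : Set.EqOn f (fun _ ↦ 1) (Set.Ici b)) :
    (∀ y : ℝ, 1 < y → y < Λ3 → deriv (H2hat Λ3 B f) y < 0) ∧
    (∀ y : ℝ, Λ3 < y → 0 < deriv (H2hat Λ3 B f) y) := by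
  refine ⟨fun y hy hyΛ3 ↦ ?_, fun y hy ↦ ?_⟩
  · have hH2' : 1 / y ^ 3 - 1 < 0 :=
      sub_neg.2 ((div_lt_one (by positivity)).2 (one_lt_pow₀ hy three_ne_zero))
    have hgap : deriv f y * (V Λ3 B y - H2 y) ≤ 0 :=
      deriv_mul_nonpos_of_monotone hfmono (support_deriv_subset_Icc hf0 hf1)
        (fun z hz ↦ sub_nonpos.2 (hVH z hz)) y
    exact deriv_interpolation_neg (hf y).hasDerivAt (hasDerivAt_H2 (by positivity))
      (hasDerivAt_V Λ3 B y) (mem_Icc_of_monotone_of_eqOn_Iic_of_eqOn_Ici hfmono hf0 hf1 y)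
      hH2' (sub_neg.2 hyΛ3) hgap
  · have hV : Set.EqOn (H2hat Λ3 B f) (V Λ3 B) (Set.Ioi Λ3) :=
      eqOn_V (hf1.mono (Set.Ioi_subset_Ici hbΛ3))
    rw [hV.deriv isOpen_Ioi hy, (hasDerivAt_V Λ3 B y).deriv]
    exact sub_pos.2 hy

/-- Claim (A.3) of the paper: `Ĥ₂' < 0` on `(1, Λ₃)` and `Ĥ₂' > 0` on `(Λ₃, ∞)`. -/
theorem stmt_15 (Λ2 Λ3 ε B : ℝ) (f : ℝ → ℝ)
    (hΛ2 : 1 < Λ2) (hΛ23 : Λ2 < Λ3)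
    (hε : 0 < ε) (hε' : ε < (Λ3 - Λ2) / 2)
    (hB : ∀ y ∈ Set.Icc (Λ2 + ε) (Λ2 + 2 * ε),
      (y - Λ3) ^ 2 / 2 + B + 1 / (2 * y ^ 2) + y ≤ 0)
    (hf : ContDiff ℝ (⊤ : ℕ∞) f) (hfmono : Monotone f)
    (hfrange : ∀ y, f y ∈ Set.Icc (0 : ℝ) 1)
    (hf0 : ∀ y, y ≤ Λ2 + ε → f y = 0)
    (hf1 : ∀ y, Λ2 + 2 * ε ≤ y → f y = 1) :
    (∀ y : ℝ, 1 < y → y < Λ3 → deriv (H2hat Λ3 B f) y < 0) ∧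
    (∀ y : ℝ, Λ3 < y → 0 < deriv (H2hat Λ3 B f) y) := by
  exact stmt_15_general (by linarith)
    (fun y hy ↦ by simp only [H2hat.V, H2hat.H2]; linarith [hB y hy])
    (hf.differentiable (by simp)) hfmono hf0 hf1
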